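/- arXiv:2008.12631 — 4 statements merged into one kernel-verified Lean document; each statement's English description precedes it below -/
import Mathlib

section
/- Let N and j be integers with 0 ≤ j < N, and let A be the (N−j) × (N−j) real matrix with rows and columns indexed by 0, 1, …, N−1−j, whose (i,k)-entry equals 1/(j+k−i)! when j+k−i ≥ 0 and equals 0 when j+k−i < 0. Then det A = ∏_{s=0}^{N−1−j} ( s! / (j+s)! ), i.e., det A = (0!·1!·2!⋯(N−1−j)!)/(j!·(j+1)!⋯(N−1)!). -/
open scoped Nat

/-!
Column `k` of the matrix is `1/(j+k)!` times the column of falling factorials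
`(j+k)(j+k-1)⋯(j+k-i+1)`, since `(j+k)!/(j+k-i)!` is that falling factorial when `i ≤ j+k` and
the falling factorial vanishes when `i > j+k`, in agreement with the convention `1/m! = 0` for
`m < 0`. Falling factorials are monic polynomials of degree `i` evaluated at `j+k`, so the
remaining determinant equals the Vandermonde determinant of the nodes `j, j+1, …, N-1`. By
translation invariance this is the Vandermonde determinant of `0, 1, …, N-1-j`, which is the
superfactorial `0!·1!⋯(N-1-j)!`.
-/

lemma one_div_factorial_eq_descPochhammer (n i : ℕ) :
    (if i ≤ n then (1 : ℝ) / ((n - i)! : ℝ) else 0)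
      = (1 / (n ! : ℝ)) * (descPochhammer ℝ i).eval (n : ℝ) := by
  rw [descPochhammer_eval_eq_descFactorial]
  split_ifs with h
  · rw [← Nat.factorial_mul_descFactorial h]
    have h1 : ((n - i)! : ℝ) ≠ 0 := by positivity
    have h2 : (n.descFactorial i : ℝ) ≠ 0 := by
      have := Nat.descFactorial_pos.mpr h
      positivity
    push_cast
    field_simp
  · rw [Nat.descFactorial_of_lt (not_le.mp h)]
    simp

/-- The matrix of falling factorials is a change of monic basis away from the Vandermonde matrix
of `j, …, j + m`, whose determinant does not depend on `j`. -/
lemma det_descPochhammer_shift (m j : ℕ) :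
    (Matrix.of fun k i : Fin (m + 1) =>
        (descPochhammer ℝ (i : ℕ)).eval (((j + (k : ℕ) : ℕ)) : ℝ)).det
      = ∏ s ∈ Finset.range (m + 1), (s ! : ℝ) := by
  rw [← Matrix.det_eval_matrixOfPolynomials_eq_det_vandermonde
    (fun k : Fin (m + 1) => ((j + (k : ℕ) : ℕ) : ℝ))
    (fun i => descPochhammer ℝ (i : ℕ)) (fun i => descPochhammer_natDegree ℝ i)
    (fun i => monic_descPochhammer ℝ i)]
  have h : (fun k : Fin (m + 1) => ((j + (k : ℕ) : ℕ) : ℝ)) =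
      fun k : Fin (m + 1) => ((k : ℕ) : ℝ) + (j : ℝ) := by
    funext k
    push_cast
    ring
  rw [h, Matrix.det_vandermonde_add, Matrix.det_vandermonde_id_eq_superFactorial,
    ← Nat.prod_range_succ_factorial]
  push_cast
  rfl

/-- Lemma 4.2: the determinant of the Hankel-type matrix of reciprocal factorials
`A_{ik} = 1/(j+k−i)!` (with `1/m! := 0` for `m < 0`), of size `(N−j) × (N−j)`,
equals `0!·1!⋯(N−1−j)! / (j!·(j+1)!⋯(N−1)!)`. -/
theorem det_reciprocal_factorial_hankel (N j : ℕ) (h : j < N) :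
    Matrix.det (Matrix.of fun i k : Fin (N - j) =>
        if (i : ℕ) ≤ j + (k : ℕ) then (1 : ℝ) / ((j + (k : ℕ) - (i : ℕ))! : ℝ) else 0)
      = ∏ s ∈ Finset.range (N - j), ((s ! : ℝ) / ((j + s)! : ℝ)) := by
  obtain ⟨m, hm⟩ : ∃ m, N - j = m + 1 := ⟨N - j - 1, by omega⟩
  rw [hm]
  simp only [one_div_factorial_eq_descPochhammer]
  rw [← Matrix.det_transpose]
  have key := Matrix.det_mul_column (fun k : Fin (m + 1) => 1 / ((j + (k : ℕ))! : ℝ))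
    (Matrix.of fun k i : Fin (m + 1) =>
      (descPochhammer ℝ (i : ℕ)).eval (((j + (k : ℕ) : ℕ)) : ℝ))
  rw [det_descPochhammer_shift, Fin.prod_univ_eq_prod_range (fun k => 1 / ((j + k)! : ℝ)),
    ← Finset.prod_mul_distrib] at key
  refine Eq.trans ?_ (key.trans (Finset.prod_congr rfl fun s _ => by ring))
  rfl
end

section
/- Let λ₁ ∈ ℂ with imaginary part λ_{1I} = Im λ₁ ≠ 0, and let N ≥ 1. Let B₁ be the N × N complex matrix with rows and columns indexed by 0, …, N−1 and entries (B₁)_{ij} = (1/(λ₁ − λ₁*)) · C(i+j, i) · ( i_ℂ/(λ₁* − λ₁) )^{i+j}. Then det(2B₁) = (−i_ℂ)^N · 2^{N(1−N)} · λ_{1I}^{−N²}. -/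
/-!
Put `y = Im λ₁`. Then `λ₁ - λ₁* = 2 i y`, so the entries of `2B₁` are
`(-i / y) * C(i+j, i) * r ^ (i+j)` with `r = -1 / (2y)`. The powers of `r` are a diagonal scaling
of both rows and columns and contribute `r ^ (N(N-1))` to the determinant. What remains is the
symmetric Pascal matrix, which by Vandermonde's identity factors as `L * Lᵀ` with `L` the lower
unitriangular matrix of binomial coefficients; hence its determinant is `1`.
-/

open Matrix

/-- Vandermonde's identity, as an entry of the product `L * Lᵀ`. -/
lemma add_choose_eq_sum_fin {N : ℕ} (i j : Fin N) :
    ((i : ℕ) + (j : ℕ)).choose (i : ℕ)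
      = ∑ k : Fin N, (i : ℕ).choose (k : ℕ) * (j : ℕ).choose (k : ℕ) := by
  rw [Fin.sum_univ_eq_sum_range (fun k => (i : ℕ).choose k * (j : ℕ).choose k) N,
    add_comm, Nat.add_choose_eq, Finset.Nat.sum_antidiagonal_eq_sum_range_succ_mk]
  have hsub : Finset.range (i : ℕ).succ ⊆ Finset.range N :=
    Finset.range_subset_range.2 i.2
  rw [← Finset.sum_subset hsub]
  · refine Finset.sum_congr rfl fun k hk => ?_
    rw [Nat.choose_symm (Nat.lt_succ_iff.1 (Finset.mem_range.1 hk)), mul_comm]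
  · intro k _ hk
    rw [Nat.choose_eq_zero_of_lt (by simpa using hk), zero_mul]

lemma det_symmetric_pascal (N : ℕ) :
    Matrix.det (Matrix.of fun i j : Fin N =>
      ((((i : ℕ) + (j : ℕ)).choose (i : ℕ) : ℕ) : ℂ)) = 1 := by
  set L : Matrix (Fin N) (Fin N) ℂ :=
    Matrix.of fun i k => (((i : ℕ).choose (k : ℕ) : ℕ) : ℂ) with hL
  have hfac : (Matrix.of fun i j : Fin N =>
      ((((i : ℕ) + (j : ℕ)).choose (i : ℕ) : ℕ) : ℂ)) = L * Lᵀ := by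
    ext i j
    simp [hL, Matrix.mul_apply, add_choose_eq_sum_fin]
  have hdet : L.det = 1 := by
    rw [Matrix.det_of_isLowerTriangular (M := L)]
    · simp [hL]
    · intro i j hij
      have h : (i : ℕ) < (j : ℕ) := by simpa using hij
      simp [hL, Nat.choose_eq_zero_of_lt h]
  rw [hfac, Matrix.det_mul, Matrix.det_transpose, hdet, one_mul]

/-- The symmetric Pascal matrix with a scalar prefactor and both-sided geometric scaling. -/
lemma det_scaled_pascal (N : ℕ) (c r : ℂ) :
    Matrix.det (Matrix.of fun i j : Fin N =>
      c * ((((i : ℕ) + (j : ℕ)).choose (i : ℕ) : ℕ) : ℂ) * r ^ ((i : ℕ) + (j : ℕ)))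
      = c ^ N * r ^ (N * (N - 1)) := by
  have h : (Matrix.of fun i j : Fin N =>
      c * ((((i : ℕ) + (j : ℕ)).choose (i : ℕ) : ℕ) : ℂ) * r ^ ((i : ℕ) + (j : ℕ)))
      = c • (Matrix.of fun i j : Fin N => r ^ (i : ℕ) *
          (Matrix.of fun i j : Fin N => r ^ (j : ℕ) *
            (Matrix.of fun i j : Fin N =>
              ((((i : ℕ) + (j : ℕ)).choose (i : ℕ) : ℕ) : ℂ)) i j) i j) := by
    ext i j
    simp only [Matrix.of_apply, Matrix.smul_apply, smul_eq_mul]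
    ring
  rw [h, Matrix.det_smul, Matrix.det_mul_column, Matrix.det_mul_row, det_symmetric_pascal,
    Fintype.card_fin, Fin.prod_univ_eq_prod_range (fun k => r ^ k) N, Finset.prod_pow_eq_pow_sum,
    mul_one, ← pow_add, ← Finset.sum_range_id_mul_two, mul_two]

/-- `det(2B₁) = (−i)^N · 2^{N(1−N)} · λ_{1I}^{−N²}` for the matrix `B₁` of the
high-order soliton determinant. -/
theorem det_two_B1 (lam1 : ℂ) (hIm : lam1.im ≠ 0) (N : ℕ) (hN : 1 ≤ N) :
    Matrix.det ((2 : ℂ) • Matrix.of fun i j : Fin N =>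
        (1 / (lam1 - (starRingEnd ℂ) lam1)) * ((((i : ℕ) + (j : ℕ)).choose (i : ℕ) : ℕ) : ℂ)
          * (Complex.I / ((starRingEnd ℂ) lam1 - lam1)) ^ ((i : ℕ) + (j : ℕ)))
      = (-Complex.I) ^ N * (2 : ℂ) ^ ((N : ℤ) * (1 - (N : ℤ)))
          * ((lam1.im : ℂ)) ^ (-((N : ℤ) ^ 2)) := by
  have hy : (lam1.im : ℂ) ≠ 0 := by exact_mod_cast hIm
  have hsub : lam1 - (starRingEnd ℂ) lam1 = 2 * lam1.im * Complex.I := by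
    rw [Complex.sub_conj]; push_cast; ring
  have hsub' : (starRingEnd ℂ) lam1 - lam1 = -(2 * lam1.im * Complex.I) := by
    rw [← hsub]; ring
  rw [hsub, hsub']
  generalize (lam1.im : ℂ) = y at hy ⊢
  have hr : Complex.I / -(2 * y * Complex.I) = -(2 * y)⁻¹ := by
    field_simp [Complex.I_ne_zero]
  have hc : 2 * (1 / (2 * y * Complex.I)) = -Complex.I * y⁻¹ := by
    field_simp [Complex.I_ne_zero]
    simp
  have hmat : ((2 : ℂ) • Matrix.of fun i j : Fin N =>
        (1 / (2 * y * Complex.I)) * ((((i : ℕ) + (j : ℕ)).choose (i : ℕ) : ℕ) : ℂ)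
          * (Complex.I / -(2 * y * Complex.I)) ^ ((i : ℕ) + (j : ℕ)))
      = Matrix.of fun i j : Fin N =>
        (-Complex.I * y⁻¹) * ((((i : ℕ) + (j : ℕ)).choose (i : ℕ) : ℕ) : ℂ)
          * (-(2 * y)⁻¹) ^ ((i : ℕ) + (j : ℕ)) := by
    ext i j
    simp only [Matrix.of_apply, Matrix.smul_apply, smul_eq_mul, hr, ← hc]
    ring
  rw [hmat, det_scaled_pascal, (Nat.even_mul_pred_self N).neg_pow]
  obtain ⟨M, rfl⟩ : ∃ M, N = M + 1 := ⟨N - 1, by omega⟩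
  have h2 : ((M + 1 : ℕ) : ℤ) * (1 - ((M + 1 : ℕ) : ℤ)) = -(((M + 1) * M : ℕ) : ℤ) := by
    push_cast; ring
  have h3 : -(((M + 1 : ℕ) : ℤ) ^ 2) = -((M + 1 + (M + 1) * M : ℕ) : ℤ) := by
    push_cast; ring
  rw [h2, h3, _root_.zpow_neg, _root_.zpow_neg, _root_.zpow_natCast, _root_.zpow_natCast, Nat.add_sub_cancel,
    mul_pow, inv_pow, inv_pow, mul_pow, pow_add y (M + 1), mul_inv, mul_inv]
  ring
end

section
/- Let λ₁ ∈ ℂ with imaginary part λ_{1I} = Im λ₁ ≠ 0, and let N ≥ 1. Let B₁ be the N × N complex matrix with rows and columns indexed by 0, …, N−1 and entries (B₁)_{ij} = (1/(λ₁ − λ₁*)) · C(i+j, i) · ( i_ℂ/(λ₁* − λ₁) )^{i+j}. Let G be the (N+1) × (N+1) complex matrix whose upper-left N × N block is 2B₁, whose last column is (i_ℂ, 0, …, 0)ᵀ, whose last row is (1, 0, …, 0), and whose bottom-right entry is 0. Then det G = (−i_ℂ)^N · λ_{1I}^{1−N²} · 2^{N(1−N)} · N. -/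
/-!
With `y = Im λ₁`, `a = -i/y` and `c = -1/(2y)`, the block `2B₁` has entries
`a * C(i+j, i) * c^(i+j)`. The symmetric Pascal matrix factors through Vandermonde's identity
`C(i+j, i) = ∑ₖ C(i,k) C(j,k)`, so `2B₁ = a • L Lᵀ` for the scaled lower triangular Pascal matrix
`L = (C(i,k) c^i)` (`pascalLower_mul_transpose`). The vanishing alternating sums of binomial
coefficients give `L w = e₀` for `w = (1, -1, 1, …)` (`pascalLower_mul_altCol`). Hence

`G = diag(L, 1) * [a • 1, i w; wᵀ, 0] * diag(Lᵀ, 1)`,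

and the middle determinant is `a^N * (-i wᵀw / a) = -i N a^(N-1)` by the Schur complement, while
`(det L)² = c^(N(N-1))`. Multiplying these gives the formula.
-/

open Matrix

/-- The lower triangular Pascal matrix with its `i`-th row scaled by `c ^ i`. -/
def pascalLower (N : ℕ) (c : ℂ) : Matrix (Fin N) (Fin N) ℂ :=
  Matrix.of fun i k => ((i : ℕ).choose (k : ℕ) : ℂ) * c ^ (i : ℕ)

/-- The column vector `(1, -1, 1, …)`, as a one-column matrix. -/
def altCol (N : ℕ) : Matrix (Fin N) (Fin 1) ℂ :=
  Matrix.of fun k _ => (-1 : ℂ) ^ (k : ℕ)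

/-- The first standard basis vector, as a one-column matrix. -/
def firstCol (N : ℕ) : Matrix (Fin N) (Fin 1) ℂ :=
  Matrix.of fun k _ => if (k : ℕ) = 0 then 1 else 0

/-- A sum over `Fin N` weighted by `C(i, k)` may be cut off at `k = i`, as `C(i, k) = 0` beyond. -/
lemma sum_fin_choose_mul {N i : ℕ} (hi : i < N) (f : ℕ → ℂ) :
    ∑ k : Fin N, (i.choose (k : ℕ) : ℂ) * f k
      = ∑ k ∈ Finset.range (i + 1), (i.choose k : ℂ) * f k := by
  rw [Fin.sum_univ_eq_sum_range (fun k => (i.choose k : ℂ) * f k) N]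
  symm
  apply Finset.sum_subset
  · intro k hk
    simp only [Finset.mem_range] at hk ⊢
    omega
  · intro k _ hk
    simp only [Finset.mem_range] at hk
    rw [Nat.choose_eq_zero_of_lt (by omega)]
    simp

lemma sum_choose_mul_choose {N i : ℕ} (hi : i < N) (j : ℕ) :
    ∑ k : Fin N, (i.choose (k : ℕ) : ℂ) * (j.choose (k : ℕ) : ℂ) = ((i + j).choose i : ℂ) := by
  rw [sum_fin_choose_mul hi (fun k => (j.choose k : ℂ)), add_comm i j, Nat.add_choose_eq,
    Finset.Nat.sum_antidiagonal_eq_sum_range_succ_mk]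
  push_cast
  refine Finset.sum_congr rfl fun k hk => ?_
  rw [Nat.choose_symm (Nat.lt_succ_iff.mp (Finset.mem_range.mp hk)), mul_comm]

lemma sum_choose_mul_alt {N i : ℕ} (hi : i < N) :
    ∑ k : Fin N, (i.choose (k : ℕ) : ℂ) * (-1 : ℂ) ^ (k : ℕ) = if i = 0 then 1 else 0 := by
  rw [sum_fin_choose_mul hi (fun k => (-1 : ℂ) ^ k), ← zero_pow_eq]
  have h := add_pow (-1 : ℂ) 1 i
  rw [neg_add_cancel] at h
  rw [h]
  refine Finset.sum_congr rfl fun k _ => ?_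
  rw [one_pow, mul_one, mul_comm]

lemma pascalLower_mul_transpose (N : ℕ) (c : ℂ) :
    pascalLower N c * (pascalLower N c)ᵀ
      = Matrix.of fun i j : Fin N => (((i : ℕ) + (j : ℕ)).choose (i : ℕ) : ℂ)
          * c ^ ((i : ℕ) + (j : ℕ)) := by
  ext i j
  simp only [pascalLower, Matrix.mul_apply, Matrix.transpose_apply, Matrix.of_apply]
  rw [← sum_choose_mul_choose i.isLt, Finset.sum_mul]
  refine Finset.sum_congr rfl fun k _ => ?_
  ring

lemma pascalLower_mul_altCol (N : ℕ) (c : ℂ) :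
    pascalLower N c * altCol N = firstCol N := by
  ext i j
  simp only [pascalLower, altCol, firstCol, Matrix.mul_apply, Matrix.of_apply]
  have h := congrArg (· * c ^ (i : ℕ)) (sum_choose_mul_alt i.isLt)
  simp only [Finset.sum_mul] at h
  rw [Finset.sum_congr rfl fun k _ => mul_right_comm _ _ _, h]
  by_cases hi : (i : ℕ) = 0 <;> simp [hi]

lemma det_pascalLower_sq (N : ℕ) (c : ℂ) :
    (pascalLower N c).det * (pascalLower N c).det = c ^ (N * (N - 1)) := by
  have hT : (pascalLower N c).IsLowerTriangular := by
    intro i j hij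
    have hlt : (i : ℕ) < (j : ℕ) := hij
    simp [pascalLower, Nat.choose_eq_zero_of_lt hlt]
  rw [Matrix.det_of_isLowerTriangular _ hT]
  simp only [pascalLower, Matrix.of_apply, Nat.choose_self, Nat.cast_one, one_mul]
  rw [Fin.prod_univ_eq_prod_range (fun k => c ^ k) N, Finset.prod_pow_eq_pow_sum, ← pow_add,
    ← Finset.sum_range_id_mul_two, mul_two]

lemma altCol_transpose_mul_altCol (N : ℕ) :
    (altCol N)ᵀ * altCol N = (N : ℂ) • (1 : Matrix (Fin 1) (Fin 1) ℂ) := by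
  ext i j
  fin_cases i
  fin_cases j
  simp [altCol, Matrix.mul_apply, ← mul_pow]

/-- The Schur complement evaluation of the middle factor. -/
lemma det_middle (N : ℕ) (a b : ℂ) (ha : a ≠ 0) :
    (Matrix.fromBlocks (a • (1 : Matrix (Fin N) (Fin N) ℂ)) (b • altCol N) (altCol N)ᵀ 0).det
      = a ^ N * (-(b * N / a)) := by
  let _ : Invertible (a • (1 : Matrix (Fin N) (Fin N) ℂ)) :=
    ⟨a⁻¹ • 1, by simp [smul_smul, ha], by simp [smul_smul, ha]⟩
  have hinv : ⅟(a • (1 : Matrix (Fin N) (Fin N) ℂ)) = a⁻¹ • 1 := rfl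
  rw [Matrix.det_fromBlocks₁₁, hinv]
  simp only [Matrix.mul_smul, Matrix.mul_one, Matrix.smul_mul, altCol_transpose_mul_altCol]
  simp
  left
  field_simp

/-- The bordered scaled Pascal matrix `[a C(i+j,i) c^(i+j), b e₀; e₀ᵀ, 0]` has determinant
`a^N * (-b N / a) * c^(N(N-1))`. -/
lemma det_bordered_pascal (N : ℕ) (a b c : ℂ) (ha : a ≠ 0) :
    (Matrix.fromBlocks (a • Matrix.of fun i j : Fin N =>
        (((i : ℕ) + (j : ℕ)).choose (i : ℕ) : ℂ) * c ^ ((i : ℕ) + (j : ℕ)))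
      (b • firstCol N) (firstCol N)ᵀ 0).det
      = a ^ N * (-(b * N / a)) * c ^ (N * (N - 1)) := by
  have hfac : Matrix.fromBlocks (a • Matrix.of fun i j : Fin N =>
        (((i : ℕ) + (j : ℕ)).choose (i : ℕ) : ℂ) * c ^ ((i : ℕ) + (j : ℕ)))
      (b • firstCol N) (firstCol N)ᵀ 0
      = Matrix.fromBlocks (pascalLower N c) 0 0 (1 : Matrix (Fin 1) (Fin 1) ℂ)
        * Matrix.fromBlocks (a • (1 : Matrix (Fin N) (Fin N) ℂ)) (b • altCol N) (altCol N)ᵀ 0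
        * Matrix.fromBlocks (pascalLower N c)ᵀ 0 0 (1 : Matrix (Fin 1) (Fin 1) ℂ) := by
    rw [← pascalLower_mul_transpose, ← pascalLower_mul_altCol N c]
    simp [Matrix.fromBlocks_multiply, Matrix.transpose_mul]
  rw [hfac, Matrix.det_mul, Matrix.det_mul, det_middle N a b ha, ← det_pascalLower_sq N c]
  simp only [Matrix.det_fromBlocks_zero₂₁, Matrix.det_transpose, Matrix.det_one, mul_one]
  ring

/-- The bordered determinant appearing in the peak-amplitude computation:
the `(N+1) × (N+1)` matrix with upper-left block `2B₁`, last column `(i, 0, …, 0)ᵀ`,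
last row `(1, 0, …, 0)` and bottom-right entry `0` has determinant
`(−i)^N · λ_{1I}^{1−N²} · 2^{N(1−N)} · N`. -/
theorem det_bordered_two_B1 (lam1 : ℂ) (hIm : lam1.im ≠ 0) (N : ℕ) (hN : 1 ≤ N) :
    Matrix.det (Matrix.of fun i j : Fin (N + 1) =>
        if hi : (i : ℕ) < N then
          if hj : (j : ℕ) < N then
            (2 : ℂ) * ((1 / (lam1 - (starRingEnd ℂ) lam1))
              * ((((i : ℕ) + (j : ℕ)).choose (i : ℕ) : ℕ) : ℂ)
              * (Complex.I / ((starRingEnd ℂ) lam1 - lam1)) ^ ((i : ℕ) + (j : ℕ)))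
          else if (i : ℕ) = 0 then Complex.I else 0
        else if (j : ℕ) = 0 then 1 else 0)
      = (-Complex.I) ^ N * ((lam1.im : ℂ)) ^ ((1 : ℤ) - (N : ℤ) ^ 2)
          * (2 : ℂ) ^ ((N : ℤ) * (1 - (N : ℤ))) * (N : ℂ) := by
  have hy : (lam1.im : ℂ) ≠ 0 := by exact_mod_cast hIm
  have hsub : lam1 - (starRingEnd ℂ) lam1 = 2 * lam1.im * Complex.I := by
    rw [Complex.sub_conj]
    push_cast
    ring
  have hsub' : (starRingEnd ℂ) lam1 - lam1 = -(2 * lam1.im * Complex.I) := by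
    rw [← hsub, neg_sub]
  rw [hsub, hsub']
  generalize (lam1.im : ℂ) = y at hy
  have hI := Complex.I_ne_zero
  have ha : (2 : ℂ) * (1 / (2 * y * Complex.I)) = -Complex.I / y := by
    field_simp
    simp
  have hc : Complex.I / -(2 * y * Complex.I) = -(2 * y)⁻¹ := by
    field_simp
  have ha0 : -Complex.I / y ≠ 0 := div_ne_zero (neg_ne_zero.mpr hI) hy
  rw [hc, ← Matrix.det_submatrix_equiv_self finSumFinEquiv]
  refine Eq.trans (congrArg Matrix.det ?_)
    ((det_bordered_pascal N (-Complex.I / y) Complex.I (-(2 * y)⁻¹) ha0).trans ?_)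
  · ext i j
    rcases i with i | i <;> rcases j with j | j
    · simp [← ha]
      ring
    · simp [firstCol, -Fin.val_eq_zero_iff]
    · simp [firstCol, -Fin.val_eq_zero_iff]
    · have : N ≠ 0 := by omega
      simp [this, -Fin.val_eq_zero_iff]
  · obtain ⟨n, rfl⟩ : ∃ n, N = n + 1 := ⟨N - 1, by omega⟩
    have hev : Even ((n + 1) * (n + 1 - 1)) := by
      simpa [mul_comm] using Nat.even_mul_succ_self n
    -- Clear the negative exponents on the right-hand side in favour of natural powers of inverses.
    have e1 : (1 : ℤ) - ((n + 1 : ℕ) : ℤ) ^ 2 = -((n + (n + 1) * n : ℕ) : ℤ) := by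
      push_cast
      ring
    have e2 : ((n + 1 : ℕ) : ℤ) * (1 - ((n + 1 : ℕ) : ℤ)) = -(((n + 1) * n : ℕ) : ℤ) := by
      push_cast
      ring
    rw [hev.neg_pow, e1, e2, _root_.zpow_neg, _root_.zpow_neg, zpow_natCast, zpow_natCast,
      Nat.add_sub_cancel, inv_pow, mul_pow, div_pow]
    field_simp
    ring
end

section
/- For N = 2, λ₁ = i (so λ_{1R} = 0, λ_{1I} = 1), and a₁^{[0]} = a₁^{[1]} = 0, the second-order soliton of the Hirota equation equals, for all (x,t) ∈ ℝ², q^{[2]}(x,t) = [ (ix − 4γt − 12iδt + i/2)·e^{−6x + 24δt + 4iγt + iπ/2} + (−ix − 4γt + 12iδt + i/2)·e^{−2x + 8δt + 4iγt + iπ/2} ] / [ −(1/16)·e^{−8x + 32δt} + ( −(x² − 24δtx + 144δ²t² + 16γ²t²) − 1/8 )·e^{−4x + 16δt} − 1/16 ]. -/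
/-!
With `λ₁ = i` one has `F₁ = e * [[1, f], [0, 1]]` and `B₁ = (-i/2) * [[1, -1/2], [-1/2, 1/2]]`,
where `e = exp (2θ₁)` and `f = f_{1,1} = ϑ_{1,0}` (the linear Taylor coefficient only sees the linear
part of the exponent). Writing `E = e ē`, expanding the determinants gives
`det M = -(E² + 1)/16 - (f f̄/4 + 1/8) E` and `2 det G = -i ē ((f - 1) E - f̄ - 1)/2`.
The `f f̄ E²` terms of `det M` and the `f f̄ E` terms of `det G / ē` cancel, and substituting `f = -2x - 8iγt + 24δt`,
`E = exp (-4x + 16δt)` and `ē E = exp (-6x + 24δt + 4iγt + iπ/2)` yields the formula.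
-/

open Matrix
open scoped Nat

/-- The spectral parameter `λ₁ = λ_{1R} + i λ_{1I}`. -/
noncomputable def lam1 (lam1R lam1I : ℝ) : ℂ := (lam1R : ℂ) + Complex.I * (lam1I : ℂ)

/-- `θ₁(x,t) = iλ₁(x + (2γλ₁ + 4δλ₁²)t) + a₁^{[0]} − iπ/4`. -/
noncomputable def theta1 (γ δ lam1R lam1I : ℝ) (a : ℕ → ℝ) (x t : ℝ) : ℂ :=
  Complex.I * lam1 lam1R lam1I
      * ((x : ℂ) + (2 * (γ : ℂ) * lam1 lam1R lam1I + 4 * (δ : ℂ) * lam1 lam1R lam1I ^ 2) * (t : ℂ))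
    + (a 0 : ℂ) - Complex.I * (Real.pi : ℂ) / 4

/-- `ϑ_{1,0} = −2[x + 4λ₁(γ + 3δλ₁)t] + 2i a₁^{[1]}`. -/
noncomputable def vtheta0 (γ δ lam1R lam1I : ℝ) (a : ℕ → ℝ) (x t : ℝ) : ℂ :=
  -2 * ((x : ℂ) + 4 * lam1 lam1R lam1I * ((γ : ℂ) + 3 * (δ : ℂ) * lam1 lam1R lam1I) * (t : ℂ))
    + 2 * Complex.I * (a 1 : ℂ)

/-- `ϑ_{1,1} = −4i(γ + 6δλ₁)t − 2a₁^{[2]}`. -/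
noncomputable def vtheta1 (γ δ lam1R lam1I : ℝ) (a : ℕ → ℝ) (t : ℝ) : ℂ :=
  -4 * Complex.I * ((γ : ℂ) + 6 * (δ : ℂ) * lam1 lam1R lam1I) * (t : ℂ) - 2 * (a 2 : ℂ)

/-- `ϑ_{1,2} = 8δt − 2i a₁^{[3]}`. -/
noncomputable def vtheta2 (δ : ℝ) (a : ℕ → ℝ) (t : ℝ) : ℂ :=
  8 * (δ : ℂ) * (t : ℂ) - 2 * Complex.I * (a 3 : ℂ)

/-- `f_{1,l}`: the `l`-th Taylor coefficient at `ε = 0` of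
`ε ↦ exp(ε(ϑ_{1,0} + εϑ_{1,1} + ε²ϑ_{1,2}))`. -/
noncomputable def fcoef (γ δ lam1R lam1I : ℝ) (a : ℕ → ℝ) (x t : ℝ) (l : ℕ) : ℂ :=
  iteratedDeriv l (fun ε : ℂ =>
      Complex.exp (ε * (vtheta0 γ δ lam1R lam1I a x t + ε * vtheta1 γ δ lam1R lam1I a t
        + ε ^ 2 * vtheta2 δ a t))) 0 / (l ! : ℂ)

/-- The `N × N` upper-shift matrix `E_N`. -/
def shiftE (N : ℕ) : Matrix (Fin N) (Fin N) ℂ :=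
  Matrix.of fun i j => if (j : ℕ) = (i : ℕ) + 1 then 1 else 0

/-- `F₁ = e^{2θ₁} (I + Σ_{l=1}^{N−1} f_{1,l} E_N^l)`. -/
noncomputable def F1 (γ δ lam1R lam1I : ℝ) (a : ℕ → ℝ) (N : ℕ) (x t : ℝ) :
    Matrix (Fin N) (Fin N) ℂ :=
  Complex.exp (2 * theta1 γ δ lam1R lam1I a x t) •
    (1 + ∑ l ∈ Finset.Icc 1 (N - 1), fcoef γ δ lam1R lam1I a x t l • shiftE N ^ l)

/-- `(B₁)_{ij} = (1/(λ₁ − λ₁*)) C(i+j, i) (i/(λ₁* − λ₁))^{i+j}`, `0 ≤ i, j ≤ N−1`. -/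
noncomputable def B1 (lam1R lam1I : ℝ) (N : ℕ) : Matrix (Fin N) (Fin N) ℂ :=
  Matrix.of fun i j =>
    (1 / (lam1 lam1R lam1I - (starRingEnd ℂ) (lam1 lam1R lam1I)))
      * ((((i : ℕ) + (j : ℕ)).choose (i : ℕ) : ℕ) : ℂ)
      * (Complex.I / ((starRingEnd ℂ) (lam1 lam1R lam1I) - lam1 lam1R lam1I)) ^ ((i : ℕ) + (j : ℕ))

/-- `M = F₁† B₁ F₁ + B₁`. -/
noncomputable def Mmat (γ δ lam1R lam1I : ℝ) (a : ℕ → ℝ) (N : ℕ) (x t : ℝ) :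
    Matrix (Fin N) (Fin N) ℂ :=
  (F1 γ δ lam1R lam1I a N x t)ᴴ * B1 lam1R lam1I N * F1 γ δ lam1R lam1I a N x t
    + B1 lam1R lam1I N

/-- The bordered matrix `G`: upper-left block `M`, last column the conjugate
transpose of the first row of `F₁` (bottom-right entry `0`), last row `e₁ = (1,0,…,0)`. -/
noncomputable def Gmat (γ δ lam1R lam1I : ℝ) (a : ℕ → ℝ) (N : ℕ) (x t : ℝ) :
    Matrix (Fin (N + 1)) (Fin (N + 1)) ℂ :=
  Matrix.of fun i j =>
    if hi : (i : ℕ) < N then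
      if hj : (j : ℕ) < N then Mmat γ δ lam1R lam1I a N x t ⟨i, hi⟩ ⟨j, hj⟩
      else (starRingEnd ℂ)
        (F1 γ δ lam1R lam1I a N x t ⟨0, lt_of_le_of_lt (Nat.zero_le _) hi⟩ ⟨i, hi⟩)
    else if (j : ℕ) = 0 then 1 else 0

/-- The `N`-th order soliton of the Hirota equation with spectral parameter `λ₁`:
`q^{[N]} = 2 det G / det M`. -/
noncomputable def qsol (γ δ lam1R lam1I : ℝ) (a : ℕ → ℝ) (N : ℕ) (x t : ℝ) : ℂ :=
  2 * Matrix.det (Gmat γ δ lam1R lam1I a N x t) / Matrix.det (Mmat γ δ lam1R lam1I a N x t)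

/-- The soliton velocity `v₁ = −4(λ_{1R}γ − λ_{1I}²δ + 3λ_{1R}²δ)`. -/
def vel1 (γ δ lam1R lam1I : ℝ) : ℝ := -4 * (lam1R * γ - lam1I ^ 2 * δ + 3 * lam1R ^ 2 * δ)

/-- `Im θ₁(x,t) = λ_{1R}x + 2(λ_{1R}² − λ_{1I}²)γt + 4(λ_{1R}² − 3λ_{1I}²)λ_{1R}δt − π/4`. -/
noncomputable def ImTheta1 (γ δ lam1R lam1I : ℝ) (x t : ℝ) : ℝ :=
  lam1R * x + 2 * (lam1R ^ 2 - lam1I ^ 2) * γ * t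
    + 4 * (lam1R ^ 2 - 3 * lam1I ^ 2) * lam1R * δ * t - Real.pi / 4

/-- `𝒞₁ = 16δλ_{1I}² + 8iγλ_{1I} + 48iδλ_{1R}λ_{1I}`. -/
noncomputable def C1 (γ δ lam1R lam1I : ℝ) : ℂ :=
  16 * (δ : ℂ) * (lam1I : ℂ) ^ 2 + 8 * Complex.I * (γ : ℂ) * (lam1I : ℂ)
    + 48 * Complex.I * (δ : ℂ) * (lam1R : ℂ) * (lam1I : ℂ)

/-- Hyperbolic secant: `sech y = 2 / (e^y + e^{-y})`. -/
noncomputable def sech (y : ℝ) : ℝ := 2 / (Real.exp y + Real.exp (-y))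

/-- The first Taylor coefficient of `ε ↦ exp (ε (ϑ₀ + ε ϑ₁ + ε² ϑ₂))` is `ϑ₀`. -/
theorem fcoef_one (γ δ lam1R lam1I : ℝ) (a : ℕ → ℝ) (x t : ℝ) :
    fcoef γ δ lam1R lam1I a x t 1 = vtheta0 γ δ lam1R lam1I a x t := by
  unfold fcoef
  generalize vtheta0 γ δ lam1R lam1I a x t = p
  generalize vtheta1 γ δ lam1R lam1I a t = q
  generalize vtheta2 δ a t = r
  have h : HasDerivAt (fun ε : ℂ => Complex.exp (ε * (p + ε * q + ε ^ 2 * r))) p 0 := by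
    have h1 : HasDerivAt (fun ε : ℂ => ε * (p + ε * q + ε ^ 2 * r)) p 0 := by
      have h2 := (hasDerivAt_id (0 : ℂ)).mul
        ((((hasDerivAt_id (0 : ℂ)).mul_const q).const_add p).add
          (((hasDerivAt_id (0 : ℂ)).pow 2).mul_const r))
      exact h2.congr_deriv (by simp)
    have h3 := h1.cexp
    simpa using h3
  simp [iteratedDeriv_one, h.deriv]

theorem F1_two (γ δ lam1R lam1I : ℝ) (a : ℕ → ℝ) (x t : ℝ) :
    F1 γ δ lam1R lam1I a 2 x t =
      Complex.exp (2 * theta1 γ δ lam1R lam1I a x t) •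
        !![1, vtheta0 γ δ lam1R lam1I a x t; 0, 1] := by
  unfold F1
  rw [show Finset.Icc 1 (2 - 1) = {1} from rfl, Finset.sum_singleton, fcoef_one, pow_one]
  congr 1
  ext i j
  fin_cases i <;> fin_cases j <;> simp [shiftE]

theorem B1_two :
    B1 0 1 2 = !![-Complex.I / 2, Complex.I / 4; Complex.I / 4, -Complex.I / 4] := by
  have hI : Complex.I * Complex.I = -1 := Complex.I_mul_I
  have h1 : (1 : ℂ) / (lam1 0 1 - (starRingEnd ℂ) (lam1 0 1)) = -Complex.I / 2 := by
    have : lam1 0 1 - (starRingEnd ℂ) (lam1 0 1) = 2 * Complex.I := by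
      simp [lam1]; ring
    rw [this]
    field_simp
    linear_combination hI
  have h2 : Complex.I / ((starRingEnd ℂ) (lam1 0 1) - lam1 0 1) = -1 / 2 := by
    have : (starRingEnd ℂ) (lam1 0 1) - lam1 0 1 = -2 * Complex.I := by
      simp [lam1]; ring
    rw [this]
    field_simp
  ext i j
  simp only [B1, h1, h2]
  fin_cases i <;> fin_cases j <;> simp <;> ring

/-- `M` for `N = 2`, `λ₁ = i`, in terms of `e = exp (2θ₁)`, `f = ϑ_{1,0}` and their conjugates. -/
theorem Mmat_two (γ δ : ℝ) (a : ℕ → ℝ) (x t : ℝ) (e f e' f' : ℂ)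
    (he : Complex.exp (2 * theta1 γ δ 0 1 a x t) = e) (hf : vtheta0 γ δ 0 1 a x t = f)
    (he' : (starRingEnd ℂ) e = e') (hf' : (starRingEnd ℂ) f = f') :
    Mmat γ δ 0 1 a 2 x t = (-Complex.I / 2) •
      !![1 + e * e', e * e' * (f - 1 / 2) - 1 / 2;
        e * e' * (f' - 1 / 2) - 1 / 2, e * e' * (f * f' - (f + f') / 2 + 1 / 2) + 1 / 2] := by
  unfold Mmat
  rw [F1_two, B1_two, he, hf]
  ext i j
  fin_cases i <;> fin_cases j <;>
    simp [Matrix.mul_apply, Fin.sum_univ_two, he', hf'] <;> ring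

theorem det_Mmat_two (γ δ : ℝ) (a : ℕ → ℝ) (x t : ℝ) (e f e' f' : ℂ)
    (he : Complex.exp (2 * theta1 γ δ 0 1 a x t) = e) (hf : vtheta0 γ δ 0 1 a x t = f)
    (he' : (starRingEnd ℂ) e = e') (hf' : (starRingEnd ℂ) f = f') :
    (Mmat γ δ 0 1 a 2 x t).det =
      -(1 / 16) * (e * e') ^ 2 + (-(f * f') / 4 - 1 / 8) * (e * e') - 1 / 16 := by
  rw [Mmat_two γ δ a x t e f e' f' he hf he' hf', Matrix.det_fin_two]
  simp
  ring_nf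
  simp only [Complex.I_sq]
  ring

theorem det_Gmat_two (γ δ : ℝ) (a : ℕ → ℝ) (x t : ℝ) (e f e' f' : ℂ)
    (he : Complex.exp (2 * theta1 γ δ 0 1 a x t) = e) (hf : vtheta0 γ δ 0 1 a x t = f)
    (he' : (starRingEnd ℂ) e = e') (hf' : (starRingEnd ℂ) f = f') :
    2 * (Gmat γ δ 0 1 a 2 x t).det =
      -Complex.I / 2 * ((f - 1) * (e * e' * e') - (f' + 1) * e') := by
  rw [Matrix.det_fin_three]
  simp [Gmat, Mmat_two γ δ a x t e f e' f' he hf he' hf', F1_two, he, hf, he', hf']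
  ring

/-- Explicit form of the second-order soliton (Example 4.1): for `N = 2`, `λ₁ = i`
and `a₁^{[0]} = a₁^{[1]} = 0`. -/
theorem qsol_second_order_explicit (γ δ : ℝ) (x t : ℝ) :
    qsol γ δ 0 1 (fun _ => 0) 2 x t
      = ((Complex.I * (x : ℂ) - 4 * (γ : ℂ) * (t : ℂ) - 12 * Complex.I * (δ : ℂ) * (t : ℂ)
            + Complex.I / 2)
          * Complex.exp (-6 * (x : ℂ) + 24 * (δ : ℂ) * (t : ℂ) + 4 * Complex.I * (γ : ℂ) * (t : ℂ)
              + Complex.I * (Real.pi : ℂ) / 2)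
        + (-Complex.I * (x : ℂ) - 4 * (γ : ℂ) * (t : ℂ) + 12 * Complex.I * (δ : ℂ) * (t : ℂ)
            + Complex.I / 2)
          * Complex.exp (-2 * (x : ℂ) + 8 * (δ : ℂ) * (t : ℂ) + 4 * Complex.I * (γ : ℂ) * (t : ℂ)
              + Complex.I * (Real.pi : ℂ) / 2))
      / (-(1 / 16) * Complex.exp (-8 * (x : ℂ) + 32 * (δ : ℂ) * (t : ℂ))
        + (-((x : ℂ) ^ 2 - 24 * (δ : ℂ) * (t : ℂ) * (x : ℂ) + 144 * (δ : ℂ) ^ 2 * (t : ℂ) ^ 2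
              + 16 * (γ : ℂ) ^ 2 * (t : ℂ) ^ 2) - 1 / 8)
          * Complex.exp (-4 * (x : ℂ) + 16 * (δ : ℂ) * (t : ℂ))
        - 1 / 16) := by
  have hf : vtheta0 γ δ 0 1 (fun _ => 0) x t
      = -2 * (x : ℂ) - 8 * Complex.I * γ * t + 24 * δ * t := by
    simp only [vtheta0, lam1]
    push_cast
    linear_combination (-24 * (δ : ℂ) * t) * Complex.I_sq
  have hf' : (starRingEnd ℂ) (-2 * (x : ℂ) - 8 * Complex.I * γ * t + 24 * δ * t)
      = -2 * (x : ℂ) + 8 * Complex.I * γ * t + 24 * δ * t := by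
    simp [Complex.conj_ofNat]
  have hθ : 2 * theta1 γ δ 0 1 (fun _ => 0) x t
      = -2 * (x : ℂ) + 8 * δ * t - 4 * Complex.I * γ * t - Complex.I * Real.pi / 2 := by
    simp only [theta1, lam1]
    push_cast
    linear_combination (2 * (x : ℂ) + 4 * Complex.I * γ * t
      + 8 * δ * t * (Complex.I ^ 2 - 1)) * Complex.I_sq
  have he' : (starRingEnd ℂ) (Complex.exp
        (-2 * (x : ℂ) + 8 * δ * t - 4 * Complex.I * γ * t - Complex.I * Real.pi / 2))
      = Complex.exp
        (-2 * (x : ℂ) + 8 * δ * t + 4 * Complex.I * γ * t + Complex.I * Real.pi / 2) := by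
    rw [← Complex.exp_conj]
    congr 1
    simp [Complex.conj_ofNat]
    ring
  unfold qsol
  rw [det_Gmat_two γ δ _ x t _ _ _ _ (congrArg Complex.exp hθ) hf he' hf',
    det_Mmat_two γ δ _ x t _ _ _ _ (congrArg Complex.exp hθ) hf he' hf']
  have hE : Complex.exp
        (-2 * (x : ℂ) + 8 * δ * t - 4 * Complex.I * γ * t - Complex.I * Real.pi / 2)
      * Complex.exp
        (-2 * (x : ℂ) + 8 * δ * t + 4 * Complex.I * γ * t + Complex.I * Real.pi / 2)
      = Complex.exp (-4 * (x : ℂ) + 16 * δ * t) := by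
    rw [← Complex.exp_add]
    ring_nf
  have hE2 : Complex.exp (-4 * (x : ℂ) + 16 * δ * t) ^ 2
      = Complex.exp (-8 * (x : ℂ) + 32 * δ * t) := by
    rw [← Complex.exp_nat_mul]
    push_cast
    ring_nf
  have hE3 : Complex.exp (-4 * (x : ℂ) + 16 * δ * t) * Complex.exp
        (-2 * (x : ℂ) + 8 * δ * t + 4 * Complex.I * γ * t + Complex.I * Real.pi / 2)
      = Complex.exp
        (-6 * (x : ℂ) + 24 * δ * t + 4 * Complex.I * γ * t + Complex.I * Real.pi / 2) := by
    rw [← Complex.exp_add]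
    ring_nf
  rw [hE, hE2, hE3]
  -- The polynomial coefficients agree modulo `I ^ 2 = -1`.
  congr 1
  · generalize Complex.exp (-6 * (x : ℂ) + _ + _ + _) = u
    generalize Complex.exp (-2 * (x : ℂ) + _ + _ + _) = v
    linear_combination (4 * (γ : ℂ) * t * (u + v)) * Complex.I_sq
  · generalize Complex.exp (-8 * (x : ℂ) + _) = u
    generalize Complex.exp (-4 * (x : ℂ) + _) = v
    linear_combination (16 * (γ : ℂ) ^ 2 * t ^ 2 * v) * Complex.I_sq
end
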